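/- Every 8×12 sign matrix has at most 12 3-neighborly plain travels. (Equivalently, every rank 8 Lawrence oriented matroid on 12 elements has at most c_8(12,3) = 24 3-neighborly reorientations.) -/

import Mathlib

/-- An `r × n` sign matrix: entries in `{+1, -1}` (1-indexed: `1 ≤ i ≤ r`, `1 ≤ j ≤ n`). -/
def IsSignMatrix (r n : ℕ) (A : ℕ → ℕ → ℤ) : Prop :=
  ∀ i j, 1 ≤ i → i ≤ r → 1 ≤ j → j ≤ n → A i j = 1 ∨ A i j = -1

/-- `A_S`: the matrix obtained from `A` by negating every entry of each column in `S`. -/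
def reorient (A : ℕ → ℕ → ℤ) (S : Finset ℕ) : ℕ → ℕ → ℤ :=
  fun i j => if j ∈ S then -A i j else A i j

/-- The first column `c'` with `c < c' ≤ n` where row `i` changes sign relative to
entry `a_{i,c}`, if such a column exists. -/
def rowChange (A : ℕ → ℕ → ℤ) (n i c : ℕ) : Option ℕ :=
  (List.range (n + 1)).find? fun c' => decide (c < c' ∧ A i c' ≠ A i c)

/-- `ttEntry A n i` is the column at which the top travel of `A` enters row `i`
(rows and columns 1-indexed): the travel enters row 1 at column 1, and, having entered
row `i` at column `c`, it enters row `i+1` at the first sign change of row `i` after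
column `c` (if any).  The value `some` at the "virtual" row `r+1` means the top travel
had a sign change in the bottom row `r`, i.e. the top travel is positive. -/
def ttEntry (A : ℕ → ℕ → ℤ) (n : ℕ) : ℕ → Option ℕ
  | 0 => none
  | 1 => some 1
  | i + 2 => (ttEntry A n (i + 1)).bind (rowChange A n (i + 1))

/-- The top travel of the `r × n` sign matrix `A` is positive: it contains two
horizontally consecutive entries of row `r` with opposite signs. -/
def ttPositive (A : ℕ → ℕ → ℤ) (r n : ℕ) : Prop :=
  (ttEntry A n (r + 1)).isSome

/-- `A` is `k`-neighborly: for every set `S` of at most `k` columns, the top travel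
of `A_S` is not positive. -/
def IsNeighborly (A : ℕ → ℕ → ℤ) (r n k : ℕ) : Prop :=
  ∀ S : Finset ℕ, S ⊆ Finset.Icc 1 n → S.card ≤ k → ¬ ttPositive (reorient A S) r n

/-- A plain travel of an `r × n` sign matrix, identified with the set `D` of columns of
its downward (vertical) moves: the columns `2 ≤ j₁ < ⋯ < j_{s-1} ≤ n` with `s ≤ r`. -/
def IsPlainTravel (r n : ℕ) (D : Finset ℕ) : Prop :=
  D ⊆ Finset.Icc 2 n ∧ D.card ≤ r - 1

/-- The top travel of `A` follows exactly the plain travel with downward-move columns `D`: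
it makes its downward moves precisely at the columns of `D` (entering rows `2, …, |D|+1`
there) and then ends at column `n` in row `|D|+1` without a further sign change. -/
def ttFollows (A : ℕ → ℕ → ℤ) (n : ℕ) (D : Finset ℕ) : Prop :=
  ttEntry A n (D.card + 2) = none ∧
  ∀ c, c ∈ D ↔ ∃ i, 2 ≤ i ∧ i ≤ D.card + 1 ∧ ttEntry A n i = some c

/-- The plain travel `D` of `A` is `k`-neighborly: there is a set `R` of columns such that
the top travel of `A_R` follows exactly the path `D` and `A_R` is a `k`-neighborly matrix. -/
def IsNeighborlyTravel (A : ℕ → ℕ → ℤ) (r n k : ℕ) (D : Finset ℕ) : Prop :=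
  ∃ R : Finset ℕ, R ⊆ Finset.Icc 1 n ∧ ttFollows (reorient A R) n D ∧
    IsNeighborly (reorient A R) r n k

/-!
The circuits of the Lawrence oriented matroid of an `r × n` sign matrix are supported on the sets of
`r + 1` columns, and negating columns so that a circuit becomes positive or negative makes the top
travel positive. For `r = 2k + 2`, `k`-neighborliness therefore forces every circuit, which has
`2k + 3` elements, to be *balanced*: it has `k + 1` elements of one sign and `k + 2` of the other.
Writing `fᵢ = ±1` for the signs of a reorientation, this says that `∏ fᵢ` over the circuit is a
fixed linear form in the `fᵢ`.

On `2k + 5` columns, put `xᵢ = p fᵢ` with `p` the product of all the signs. Then `xₐ ^ 2 = 1`, and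
balancedness on the complement of `{a, b}` expresses `xₐ x_b` as a fixed linear form in the others.
A sign computation with four columns shows that `1` also lies in the span of the `xᵢ`, so this span
is an algebra of functions on the set of neighborly reorientations (up to global sign). It separates
these reorientations, so there are at most as many of them as there are columns.

Adding a column increases the bound by at most one: if a reorientation extends in both ways to the
new column, all its circuit sums through that column vanish, and this determines it up to sign.
-/

section SpanningFunctions

open Finset Submodule

variable {ι K A X : Type*} [Field K]

theorem card_le_card_of_mul_mem_span {s : Finset (X → K)} (hone : 1 ∈ span K (s : Set (X → K)))
    (hmul : ∀ f ∈ s, ∀ g ∈ s, f * g ∈ span K (s : Set (X → K)))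
    (hsep : ∀ x y, (∀ f ∈ s, f x = f y) → x = y) : Nat.card X ≤ #s := by
  have hclosed : ∀ f g : X → K, f ∈ span K (s : Set (X → K)) → g ∈ span K (s : Set (X → K)) →
      f * g ∈ span K (s : Set (X → K)) := fun f g hf hg ↦
    (span_mul_span K (s : Set (X → K)) s ▸ span_le.2 (Set.mul_subset_iff.2 hmul))
      (Submodule.mul_mem_mul hf hg)
  let B : Subalgebra K (X → K) := (span K (s : Set (X → K))).toSubalgebra hone hclosed
  let evalAt (x : X) : B →ₐ[K] K := (Pi.evalAlgHom K (fun _ : X ↦ K) x).comp B.val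
  have hinj : Function.Injective evalAt := fun x y hxy ↦
    hsep x y fun f hf ↦ DFunLike.congr_fun hxy ⟨f, subset_span hf⟩
  have : FiniteDimensional K B := FiniteDimensional.span_finset K s
  calc Nat.card X ≤ Nat.card (B →ₐ[K] K) := Nat.card_le_card_of_injective evalAt hinj
    _ ≤ Module.finrank K B := card_algHom_le_finrank K B K
    _ ≤ #s := finrank_span_finset_le_card s

variable [DecidableEq ι] [CommRing A] [Algebra K A] {V : Finset ι} {x : ι → A}
  {τ : ι → ι → ι → K}

theorem mul_mul_sub_smul_one_mem_span (hsq : ∀ a ∈ V, x a * x a = 1)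
    (hmul : ∀ a ∈ V, ∀ b ∈ V, a ≠ b → x a * x b = ∑ i ∈ (V.erase a).erase b, τ a b i • x i)
    {a b c : ι} (ha : a ∈ V) (hb : b ∈ V) (hc : c ∈ V) (hab : a ≠ b) (hac : a ≠ c) (hbc : b ≠ c) :
    x a * x b * x c - τ a b c • 1 ∈ span K (x '' V) := by
  have hcC : c ∈ (V.erase a).erase b := by simp [hc, hac.symm, hbc.symm]
  rw [hmul a ha b hb hab, sum_mul, ← add_sum_erase _ _ hcC, smul_mul_assoc, hsq c hc,
    add_sub_cancel_left]
  refine sum_mem fun i hi ↦ ?_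
  simp only [mem_erase] at hi
  rw [smul_mul_assoc, hmul i hi.2.2.2 c hc hi.1]
  exact smul_mem _ _ <| sum_smul_mem _ _ fun j hj ↦
    subset_span ⟨j, mem_of_mem_erase (mem_of_mem_erase hj), rfl⟩

theorem one_mem_span_of_structure_ne (hsq : ∀ a ∈ V, x a * x a = 1)
    (hmul : ∀ a ∈ V, ∀ b ∈ V, a ≠ b → x a * x b = ∑ i ∈ (V.erase a).erase b, τ a b i • x i)
    {a b c : ι} (ha : a ∈ V) (hb : b ∈ V) (hc : c ∈ V) (hab : a ≠ b) (hac : a ≠ c) (hbc : b ≠ c)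
    (hτ : τ a b c ≠ τ b c a) : (1 : A) ∈ span K (x '' V) := by
  -- The two ways of bracketing `x a * x b * x c` give different constant terms.
  have habc := mul_mul_sub_smul_one_mem_span hsq hmul ha hb hc hab hac hbc
  have hbca := mul_mul_sub_smul_one_mem_span hsq hmul hb hc ha hbc hab.symm hac.symm
  have hdiff : (τ b c a - τ a b c) • (1 : A) ∈ span K (x '' V) := by
    convert sub_mem habc hbca using 1
    rw [sub_smul]
    ring
  exact (smul_mem_iff _ (sub_ne_zero.2 hτ.symm)).1 hdiff

end SpanningFunctions

section Signs

open Finset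

variable {ι : Type*} {s : Finset ι} {x : ι → ℤˣ}

theorem sum_units_eq_card_sub (s : Finset ι) (x : ι → ℤˣ) :
    ∑ i ∈ s, (x i : ℤ) = #s - 2 * #{i ∈ s | x i = -1} := by
  have hx (i : ι) : (x i : ℤ) = 1 - 2 * if x i = -1 then 1 else 0 := by
    rcases Int.units_eq_one_or (x i) with h | h <;> simp [h]
  simp only [hx, sum_sub_distrib, ← mul_sum, sum_boole, sum_const, nsmul_one]

theorem prod_units_eq_neg_one_pow (s : Finset ι) (x : ι → ℤˣ) :
    ∏ i ∈ s, x i = (-1) ^ #{i ∈ s | x i = -1} := by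
  have hx (i : ι) : x i = if x i = -1 then -1 else 1 := by
    rcases Int.units_eq_one_or (x i) with h | h <;> simp [h]
  rw [prod_congr rfl fun i _ ↦ hx i, prod_ite, prod_const, prod_const_one, mul_one]

theorem prod_units_of_sum_eq_zero (h : ∑ i ∈ s, (x i : ℤ) = 0) :
    ∏ i ∈ s, x i = (-1) ^ (#s / 2) := by
  rw [sum_units_eq_card_sub] at h
  rw [prod_units_eq_neg_one_pow]
  congr 1
  omega

theorem sum_units_of_abs_sum_le_one (hs : Odd #s) (h : |∑ i ∈ s, (x i : ℤ)| ≤ 1) :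
    ∑ i ∈ s, (x i : ℤ) = ((-1) ^ (#s / 2) * ∏ i ∈ s, x i : ℤˣ) := by
  obtain ⟨m, hm⟩ := hs
  rw [sum_units_eq_card_sub, abs_le] at h
  rw [sum_units_eq_card_sub, prod_units_eq_neg_one_pow, ← pow_add, show #s / 2 = m by omega]
  obtain hneg | hneg : #{i ∈ s | x i = -1} = m ∨ #{i ∈ s | x i = -1} = m + 1 := by omega
  · rw [hneg, (Even.add_self m).neg_one_pow, hm]
    push_cast
    ring
  · rw [hneg, ← add_assoc, pow_succ, (Even.add_self m).neg_one_pow, hm]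
    push_cast
    ring

theorem abs_sum_units_le_one {k : ℕ} (hs : #s = 2 * k + 3)
    (h : ∀ ε : ℤˣ, k < #{i ∈ s | x i = ε}) : |∑ i ∈ s, (x i : ℤ)| ≤ 1 := by
  have hpos : {i ∈ s | x i = 1} = {i ∈ s | ¬ x i = -1} := by
    refine filter_congr fun i _ ↦ ?_
    rcases Int.units_eq_one_or (x i) with h | h <;> simp [h]
  have hcard := card_filter_add_card_filter_not (s := s) (fun i ↦ x i = -1)
  have hone := h 1
  have hneg := h (-1)
  rw [hpos] at hone
  rw [sum_units_eq_card_sub, abs_le]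
  omega

theorem eq_of_prod_powersetCard_const {M : Type*} [CancelCommMonoid M] {m : ℕ} {g : ι → M} {c : M}
    (hm : m ≠ 0) (hms : m < #s) (hg : ∀ C ∈ s.powersetCard m, ∏ i ∈ C, g i = c)
    {i j : ι} (hi : i ∈ s) (hj : j ∈ s) : g i = g j := by
  classical
  obtain rfl | hij := eq_or_ne i j
  · rfl
  have hji : j ∈ s.erase i := mem_erase.2 ⟨hij.symm, hj⟩
  obtain ⟨B, hB, hBcard⟩ : ∃ B ⊆ (s.erase i).erase j, #B = m - 1 :=
    exists_subset_card_eq (by rw [card_erase_of_mem hji, card_erase_of_mem hi]; omega)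
  have hprod {a : ι} (ha : a ∈ s) (haB : a ∉ B) : g a * ∏ b ∈ B, g b = c := by
    rw [← prod_insert haB]
    refine hg _ (mem_powersetCard.2 ⟨insert_subset ha fun b hb ↦ ?_, ?_⟩)
    · exact mem_of_mem_erase (mem_of_mem_erase (hB hb))
    · rw [card_insert_of_notMem haB]
      omega
  refine mul_right_cancel ((hprod hi fun h ↦ ?_).trans (hprod hj fun h ↦ ?_).symm)
  · exact notMem_erase i s (mem_of_mem_erase (hB h))
  · exact notMem_erase j _ (hB h)

end Signs

section Circuits

open Finset

variable {α : Type*} [LinearOrder α]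

/-- The number of elements of `C` preceding `i`, that is, the 0-indexed position of `i` in `C`
when `i ∈ C`. -/
def posIn (C : Finset α) (i : α) : ℕ := #{j ∈ C | j < i}

/-- The sign of `i` in the signed circuit supported on `C` of the uniform oriented matroid with
chirotope `χ`; here `χ` assigns a sign to a basis listed in increasing order. -/
def circuitSign (χ : Finset α → ℤˣ) (C : Finset α) (i : α) : ℤˣ :=
  (-1) ^ posIn C i * χ (C.erase i)

/-- The sign by which the column `i` is multiplied when the columns in `R` are negated. -/
def colSign (R : Finset α) (i : α) : ℤˣ := if i ∈ R then -1 else 1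

/-- After reorienting by `R`, the numbers of positive and negative elements of the circuit
supported on `C` differ by at most one. -/
def IsBalanced (χ : Finset α → ℤˣ) (C R : Finset α) : Prop :=
  |∑ i ∈ C, ((circuitSign χ C i * colSign R i : ℤˣ) : ℤ)| ≤ 1

/-- The coefficients of the linear form in the signs `colSign R i`, `i ∈ C`, whose value is their
product whenever `R` is balanced on `C`. -/
def normalizedSign (χ : Finset α → ℤˣ) (C : Finset α) (i : α) : ℤˣ :=
  (-1) ^ (#C / 2) * (∏ j ∈ C, circuitSign χ C j) * circuitSign χ C i

variable {χ : Finset α → ℤˣ} {C R V : Finset α} {a b c e v : α} {k : ℕ}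

theorem IsBalanced.prod_colSign (hC : Odd #C) (h : IsBalanced χ C R) :
    ((∏ i ∈ C, colSign R i : ℤˣ) : ℤ) = ∑ i ∈ C, (normalizedSign χ C i * colSign R i : ℤ) := by
  have hsum := sum_units_of_abs_sum_le_one hC h
  set η : ℤˣ := (-1) ^ (#C / 2) * ∏ j ∈ C, circuitSign χ C j with hη
  calc ((∏ i ∈ C, colSign R i : ℤˣ) : ℤ)
      = η * ((-1) ^ (#C / 2) * ∏ i ∈ C, circuitSign χ C i * colSign R i : ℤˣ) := by
        rw [prod_mul_distrib, ← mul_assoc, ← hη, ← Units.val_mul, ← mul_assoc,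
          Int.units_mul_self, one_mul]
    _ = ∑ i ∈ C, (normalizedSign χ C i * colSign R i : ℤ) := by
        rw [← hsum, mul_sum]
        exact sum_congr rfl fun i _ ↦ by simp only [normalizedSign, ← hη]; push_cast; ring

theorem posIn_orderEmbOfFin {r : ℕ} (hC : #C = r) (t : Fin r) :
    posIn C (C.orderEmbOfFin hC t) = t := by
  calc posIn C (C.orderEmbOfFin hC t)
      = posIn (univ.map (C.orderEmbOfFin hC).toEmbedding) (C.orderEmbOfFin hC t) := by
        rw [map_orderEmbOfFin_univ]
    _ = #(Iio t) := by
        rw [posIn, filter_map, card_map]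
        congr 1
        ext s
        simp
    _ = t := Fin.card_Iio t

theorem posIn_erase_add (ha : a ∈ V) :
    posIn (V.erase a) c + (if a < c then 1 else 0) = posIn V c := by
  have herase : filter (· < c) (V.erase a) = (filter (· < c) V).erase a := filter_erase ..
  unfold posIn
  rw [herase]
  split_ifs with hac
  · exact card_erase_add_one (mem_filter.2 ⟨ha, hac⟩)
  · rw [erase_eq_of_notMem (by simp [hac]), add_zero]

theorem neg_one_pow_posIn_erase (ha : a ∈ V) :
    (-1 : ℤˣ) ^ posIn (V.erase a) c = (-1) ^ posIn V c * if a < c then -1 else 1 := by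
  rw [← posIn_erase_add ha, pow_add, mul_assoc]
  split_ifs <;> simp

/-- The product of the signs of the circuit supported on `V \ {a, b}`. -/
def complementSign (χ : Finset α → ℤˣ) (V : Finset α) (a b : α) : ℤˣ :=
  ∏ j ∈ (V.erase a).erase b, circuitSign χ ((V.erase a).erase b) j

theorem complementSign_comm (χ : Finset α → ℤˣ) (V : Finset α) (a b : α) :
    complementSign χ V a b = complementSign χ V b a := by
  simp only [complementSign, erase_right_comm]

theorem normalizedSign_erase_erase (ha : a ∈ V) (hb : b ∈ V) (hab : a ≠ b) :
    normalizedSign χ ((V.erase a).erase b) c =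
      (-1) ^ ((#V - 2) / 2) * χ (((V.erase a).erase b).erase c) *
        (complementSign χ V a b * (-1) ^ posIn V c *
          (if a < c then -1 else 1) * if b < c then -1 else 1) := by
  have hb' : b ∈ V.erase a := mem_erase.2 ⟨hab.symm, hb⟩
  rw [normalizedSign, circuitSign, neg_one_pow_posIn_erase hb', neg_one_pow_posIn_erase ha,
    card_erase_of_mem hb', card_erase_of_mem ha, Nat.sub_sub, complementSign]
  simp only [mul_assoc, mul_comm, mul_left_comm]

theorem complementSign_mul_eq_of_normalizedSign_eq (ha : a ∈ V) (hb : b ∈ V) (hc : c ∈ V)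
    (hab : a ≠ b) (hbc : b ≠ c)
    (h : normalizedSign χ ((V.erase a).erase b) c = normalizedSign χ ((V.erase b).erase c) a) :
    complementSign χ V a b * (-1) ^ posIn V c * (if a < c then -1 else 1) *
        (if b < c then -1 else 1) =
      complementSign χ V b c * (-1) ^ posIn V a * (if b < a then -1 else 1) *
        (if c < a then -1 else 1) := by
  have herase : ((V.erase b).erase c).erase a = ((V.erase a).erase b).erase c := by
    rw [erase_right_comm (a := c), erase_right_comm (a := b)]
  rw [normalizedSign_erase_erase ha hb hab, normalizedSign_erase_erase hb hc hbc, herase] at h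
  exact mul_left_cancel h

theorem exists_normalizedSign_ne (χ : Finset α → ℤˣ) (hV : 4 ≤ #V) :
    ∃ a ∈ V, ∃ b ∈ V, ∃ c ∈ V, a ≠ b ∧ a ≠ c ∧ b ≠ c ∧
      normalizedSign χ ((V.erase a).erase b) c ≠ normalizedSign χ ((V.erase b).erase c) a := by
  -- Equality throughout would determine the ratio of `q (f 1) (f 2)` to `q (f 1) (f 3)` for any
  -- four elements `f 0 < f 1 < f 2 < f 3` of `V` in two ways which differ in sign.
  by_contra! heq
  let q := complementSign χ V
  let ρ (i : α) : ℤˣ := (-1) ^ posIn V i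
  have hcyclic {a b c : α} (ha : a ∈ V) (hb : b ∈ V) (hc : c ∈ V) (hab : a ≠ b) (hac : a ≠ c)
      (hbc : b ≠ c) : q a b * ρ c * (if a < c then -1 else 1) * (if b < c then -1 else 1) =
        q b c * ρ a * (if b < a then -1 else 1) * (if c < a then -1 else 1) :=
    complementSign_mul_eq_of_normalizedSign_eq ha hb hc hab hbc (heq a ha b hb c hc hab hac hbc)
  let f : Fin 4 ↪o α := V.orderEmbOfCardLe hV
  have hf (i : Fin 4) : f i ∈ V := V.orderEmbOfCardLe_mem hV i
  have h₀₁ : f 0 < f 1 := f.strictMono (by decide)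
  have h₁₂ : f 1 < f 2 := f.strictMono (by decide)
  have h₂₃ : f 2 < f 3 := f.strictMono (by decide)
  have h₁₃ : f 1 < f 3 := h₁₂.trans h₂₃
  have hlow : q (f 0) (f 1) * ρ (f 2) = q (f 1) (f 2) * ρ (f 0) := by
    simpa [h₀₁, h₁₂, h₀₁.trans h₁₂, h₀₁.not_gt, (h₀₁.trans h₁₂).not_gt] using
      hcyclic (hf 0) (hf 1) (hf 2) h₀₁.ne (h₀₁.trans h₁₂).ne h₁₂.ne
  have houter : q (f 0) (f 1) * ρ (f 3) = q (f 1) (f 3) * ρ (f 0) := by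
    simpa [h₀₁, h₁₃, h₀₁.trans h₁₃, h₀₁.not_gt, (h₀₁.trans h₁₃).not_gt] using
      hcyclic (hf 0) (hf 1) (hf 3) h₀₁.ne (h₀₁.trans h₁₃).ne h₁₃.ne
  have hhigh : -(q (f 1) (f 3) * ρ (f 2)) = q (f 1) (f 2) * ρ (f 3) := by
    rw [show q (f 1) (f 3) = q (f 3) (f 1) from complementSign_comm χ V _ _]
    simpa [h₁₂, h₂₃, h₁₃, h₂₃.not_gt] using
      hcyclic (hf 3) (hf 1) (hf 2) h₁₃.ne' h₂₃.ne' h₁₂.ne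
  have hcancel : q (f 1) (f 3) * ρ (f 2) = q (f 1) (f 2) * ρ (f 3) := by
    apply mul_left_cancel (a := q (f 0) (f 1) * ρ (f 0))
    calc _ = q (f 0) (f 1) * ρ (f 2) * (q (f 1) (f 3) * ρ (f 0)) := by ac_rfl
      _ = q (f 0) (f 1) * ρ (f 0) * (q (f 1) (f 2) * ρ (f 3)) := by
        rw [hlow, ← houter]
        ac_rfl
  exact units_ne_neg_self _ (hcancel.trans hhigh.symm)

theorem colSign_eq_neg_one_iff : colSign R a = -1 ↔ a ∈ R := by
  simp [colSign]

theorem eq_of_colSign_eqOn {R' : Finset α} (hR : R ⊆ V) (hR' : R' ⊆ V)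
    (h : ∀ i ∈ V, colSign R i = colSign R' i) : R = R' := by
  ext i
  refine ⟨fun hi ↦ ?_, fun hi ↦ ?_⟩
  · rwa [← colSign_eq_neg_one_iff, ← h i (hR hi), colSign_eq_neg_one_iff]
  · rwa [← colSign_eq_neg_one_iff, h i (hR' hi), colSign_eq_neg_one_iff]

theorem colSign_eq_one (h : R ⊆ V.erase v) : colSign R v = 1 :=
  if_neg fun hv ↦ notMem_erase v V (h hv)

/-- The sign of the column `i` normalized by the product of the signs of all columns in `V`. For
odd `#V` this does not change when all signs in `V` are reversed simultaneously. -/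
def twistedSign (V R : Finset α) (i : α) : ℤˣ := (∏ j ∈ V, colSign R j) * colSign R i

theorem IsBalanced.twistedSign_mul_twistedSign (hodd : Odd #V) (ha : a ∈ V) (hb : b ∈ V)
    (hab : a ≠ b) (h : IsBalanced χ ((V.erase a).erase b) R) :
    (twistedSign V R a * twistedSign V R b : ℤ) =
      ∑ i ∈ (V.erase a).erase b,
        (normalizedSign χ ((V.erase a).erase b) i * twistedSign V R i : ℤ) := by
  set C := (V.erase a).erase b with hC
  have hb' : b ∈ V.erase a := mem_erase.2 ⟨hab.symm, hb⟩
  have hCodd : Odd #C := by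
    rw [hC, card_erase_of_mem hb', card_erase_of_mem ha, Nat.sub_sub]
    exact Nat.Odd.sub_even (one_lt_card.2 ⟨a, ha, b, hb, hab⟩) hodd even_two
  have hprod : ∏ j ∈ V, colSign R j = colSign R a * (colSign R b * ∏ j ∈ C, colSign R j) := by
    rw [mul_prod_erase _ _ hb', mul_prod_erase _ _ ha]
  calc (twistedSign V R a * twistedSign V R b : ℤ)
      = ((∏ j ∈ V, colSign R j) * ∏ j ∈ C, colSign R j : ℤˣ) := by
        norm_cast
        rw [twistedSign, twistedSign, mul_mul_mul_comm, Int.units_mul_self, one_mul, hprod,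
          mul_assoc, mul_assoc, Int.units_mul_self, mul_one]
    _ = _ := by
        rw [Units.val_mul, h.prod_colSign hCodd, mul_sum]
        exact sum_congr rfl fun i _ ↦ by
          rw [twistedSign, Units.val_mul]
          ring

theorem eq_of_twistedSign_eqOn {R' : Finset α} (hv : v ∈ V) (hR : R ⊆ V.erase v)
    (hR' : R' ⊆ V.erase v) (h : ∀ i ∈ V, twistedSign V R i = twistedSign V R' i) : R = R' := by
  have hprod : ∏ j ∈ V, colSign R j = ∏ j ∈ V, colSign R' j := by
    simpa only [twistedSign, colSign_eq_one hR, colSign_eq_one hR', mul_one] using h v hv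
  refine eq_of_colSign_eqOn (hR.trans (erase_subset v V)) (hR'.trans (erase_subset v V))
    fun i hi ↦ mul_left_cancel (a := ∏ j ∈ V, colSign R j) ?_
  simpa only [twistedSign, ← hprod] using h i hi

theorem card_le_of_isBalanced_erase_erase {X : Finset (Finset α)} (hodd : Odd #V) (hV : 4 ≤ #V)
    (hv : v ∈ V) (hX : ∀ R ∈ X, R ⊆ V.erase v)
    (hbal : ∀ R ∈ X, ∀ a ∈ V, ∀ b ∈ V, a ≠ b → IsBalanced χ ((V.erase a).erase b) R) :
    #X ≤ #V := by
  let F (i : α) (R : X) : ℚ := (twistedSign V R i : ℤ)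
  have hsq : ∀ a ∈ V, F a * F a = 1 := fun a _ ↦ by
    ext R
    simp [F, ← Int.cast_mul, ← Units.val_mul]
  have hmul : ∀ a ∈ V, ∀ b ∈ V, a ≠ b → F a * F b = ∑ i ∈ (V.erase a).erase b,
      ((normalizedSign χ ((V.erase a).erase b) i : ℤ) : ℚ) • F i := fun a ha b hb hab ↦ by
    ext R
    simpa [F] using congrArg (Int.cast : ℤ → ℚ)
      ((hbal R R.2 a ha b hb hab).twistedSign_mul_twistedSign hodd ha hb hab)
  have hone : 1 ∈ Submodule.span ℚ (F '' V) := by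
    obtain ⟨a, ha, b, hb, c, hc, hab, hac, hbc, hne⟩ := exists_normalizedSign_ne χ hV
    exact one_mem_span_of_structure_ne hsq hmul ha hb hc hab hac hbc (by exact_mod_cast hne)
  rw [← coe_image] at hone
  calc #X = Nat.card X := (Nat.card_eq_finsetCard X).symm
    _ ≤ #(V.image F) := card_le_card_of_mul_mem_span hone ?_ ?_
    _ ≤ #V := card_image_le
  · simp only [mem_image, forall_exists_index, and_imp, forall_apply_eq_imp_iff₂]
    intro a ha b hb
    obtain rfl | hab := eq_or_ne a b
    · rwa [hsq a ha]
    · rw [hmul a ha b hb hab]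
      exact Submodule.sum_smul_mem _ _ fun i hi ↦ Submodule.subset_span <|
        mem_image_of_mem F (mem_of_mem_erase (mem_of_mem_erase hi))
  · exact fun R R' h ↦ Subtype.ext <| eq_of_twistedSign_eqOn hv (hX R R.2) (hX R' R'.2)
      fun i hi ↦ Units.ext <| Int.cast_injective <| h (F i) (mem_image_of_mem F hi)

theorem colSign_insert_of_ne (h : a ≠ e) : colSign (insert e R) a = colSign R a := by
  simp only [colSign, mem_insert, h, false_or]

theorem IsBalanced.erase (h : IsBalanced χ C R) (he : e ∉ C) : IsBalanced χ C (R.erase e) := by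
  have hsign : ∀ i ∈ C, colSign (R.erase e) i = colSign R i := fun i hi ↦ by
    simp only [colSign, mem_erase, ne_of_mem_of_not_mem hi he, ne_eq, not_false_eq_true, true_and]
  rwa [IsBalanced, sum_congr rfl fun i hi ↦ by rw [hsign i hi]]

theorem sum_eq_zero_of_isBalanced_insert (heC : e ∉ C) (heR : e ∉ R)
    (h : IsBalanced χ (insert e C) R) (h' : IsBalanced χ (insert e C) (insert e R)) :
    ∑ i ∈ C, ((circuitSign χ (insert e C) i * colSign R i : ℤˣ) : ℤ) = 0 := by
  have hrest : ∑ i ∈ C, ((circuitSign χ (insert e C) i * colSign (insert e R) i : ℤˣ) : ℤ) =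
      ∑ i ∈ C, ((circuitSign χ (insert e C) i * colSign R i : ℤˣ) : ℤ) :=
    sum_congr rfl fun i hi ↦ by rw [colSign_insert_of_ne (ne_of_mem_of_not_mem hi heC)]
  have hR : colSign R e = 1 := if_neg heR
  have hR' : colSign (insert e R) e = -1 := if_pos (mem_insert_self e R)
  rw [IsBalanced, sum_insert heC, abs_le, hR] at h
  rw [IsBalanced, sum_insert heC, hrest, abs_le, hR'] at h'
  rcases Int.units_eq_one_or (circuitSign χ (insert e C) e) with he | he <;>
    simp only [he, mul_one, mul_neg, Units.val_one, Units.val_neg, neg_neg] at h h' <;> omega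

theorem card_le_one_of_isBalanced_insert {W : Finset α} {Y : Finset (Finset α)}
    (hW : 2 * k + 3 ≤ #W) (he : e ∉ W) (hv : v ∈ W) (hY : ∀ R ∈ Y, R ⊆ W.erase v)
    (hbal : ∀ R ∈ Y, ∀ C ∈ W.powersetCard (2 * k + 2),
      IsBalanced χ (insert e C) R ∧ IsBalanced χ (insert e C) (insert e R)) : #Y ≤ 1 := by
  -- Each circuit sum over `C` vanishes, which prescribes the product of the column signs over `C`.
  have hprod : ∀ R ∈ Y, ∀ C ∈ W.powersetCard (2 * k + 2),
      ∏ i ∈ C, colSign R i = (-1) ^ (#C / 2) * ∏ i ∈ C, circuitSign χ (insert e C) i := by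
    intro R hR C hC
    have heC : e ∉ C := fun h ↦ he ((mem_powersetCard.1 hC).1 h)
    have heR : e ∉ R := fun h ↦ he (mem_of_mem_erase (hY R hR h))
    rw [← prod_units_of_sum_eq_zero (sum_eq_zero_of_isBalanced_insert heC heR (hbal R hR C hC).1
      (hbal R hR C hC).2), prod_mul_distrib, mul_right_comm, ← prod_mul_distrib]
    simp only [Int.units_mul_self, prod_const_one, one_mul]
  refine card_le_one.2 fun R hR R' hR' ↦ ?_
  have hquot : ∀ C ∈ W.powersetCard (2 * k + 2), ∏ i ∈ C, colSign R i * colSign R' i = 1 :=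
    fun C hC ↦ by rw [prod_mul_distrib, hprod R hR C hC, hprod R' hR' C hC, Int.units_mul_self]
  refine eq_of_colSign_eqOn ((hY R hR).trans (erase_subset v W))
    ((hY R' hR').trans (erase_subset v W)) fun i hi ↦ ?_
  have hi_eq_v := eq_of_prod_powersetCard_const (by omega) (by omega) hquot hi hv
  rwa [colSign_eq_one (hY R hR), colSign_eq_one (hY R' hR'), one_mul, mul_eq_one_iff_eq_inv,
    Int.units_inv_eq_self] at hi_eq_v

theorem card_le_card_image_erase_add_one {X : Finset (Finset α)} (hV : 2 * k + 4 ≤ #V)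
    (he : e ∈ V) (hv : v ∈ V) (hev : e ≠ v) (hX : ∀ R ∈ X, R ⊆ V.erase v)
    (hbal : ∀ R ∈ X, ∀ C ∈ V.powersetCard (2 * k + 3), IsBalanced χ C R) :
    #X ≤ #(X.image (·.erase e)) + 1 := by
  have hinter : #(X.memberSubfamily e ∩ X.nonMemberSubfamily e) ≤ 1 := by
    refine card_le_one_of_isBalanced_insert (χ := χ) (k := k) (W := V.erase e)
      (by rw [card_erase_of_mem he]; omega) (notMem_erase e V) (mem_erase.2 ⟨hev.symm, hv⟩) ?_ ?_
    · intro R hR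
      simp only [mem_inter, mem_memberSubfamily, mem_nonMemberSubfamily] at hR
      rw [erase_right_comm]
      exact subset_erase.2 ⟨hX R hR.2.1, hR.2.2⟩
    · intro R hR C hC
      simp only [mem_inter, mem_memberSubfamily, mem_nonMemberSubfamily] at hR
      rw [mem_powersetCard, subset_erase] at hC
      have hC' : insert e C ∈ V.powersetCard (2 * k + 3) :=
        mem_powersetCard.2 ⟨insert_subset he hC.1.1, by rw [card_insert_of_notMem hC.1.2, hC.2]⟩
      exact ⟨hbal R hR.2.1 _ hC', hbal _ hR.1.1 _ hC'⟩
  rw [← card_memberSubfamily_add_card_nonMemberSubfamily e X, ← card_union_add_card_inter,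
    memberSubfamily_union_nonMemberSubfamily]
  exact Nat.add_le_add_left hinter _

theorem card_le_of_isBalanced {X : Finset (Finset α)} (hV : 2 * k + 5 ≤ #V) (hv : v ∈ V)
    (hX : ∀ R ∈ X, R ⊆ V.erase v)
    (hbal : ∀ R ∈ X, ∀ C ∈ V.powersetCard (2 * k + 3), IsBalanced χ C R) : #X ≤ #V := by
  obtain ⟨m, hm⟩ := Nat.exists_eq_add_of_le hV
  induction m generalizing V X with
  | zero =>
    refine card_le_of_isBalanced_erase_erase (χ := χ) (hm ▸ ⟨k + 2, by ring⟩) (by omega) hv hX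
      fun R hR a ha b hb hab ↦ hbal R hR _ (mem_powersetCard.2 ⟨?_, ?_⟩)
    · exact (erase_subset b _).trans (erase_subset a V)
    · rw [card_erase_of_mem (mem_erase.2 ⟨hab.symm, hb⟩), card_erase_of_mem ha, hm]
      omega
  | succ m ih =>
    obtain ⟨e, he, hev⟩ := exists_mem_ne (s := V) (by omega) v
    have hcard : #(V.erase e) + 1 = #V := card_erase_add_one he
    have hdel : #(X.image (·.erase e)) ≤ #(V.erase e) := by
      refine ih (by omega) (mem_erase.2 ⟨hev.symm, hv⟩) ?_ ?_ (by omega)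
      · refine forall_mem_image.2 fun R hR ↦ ?_
        rw [erase_right_comm]
        exact erase_subset_erase e (hX R hR)
      · refine forall_mem_image.2 fun R hR C hC ↦ ?_
        rw [mem_powersetCard, subset_erase] at hC
        exact (hbal R hR C (mem_powersetCard.2 ⟨hC.1.1, hC.2⟩)).erase hC.1.2
    exact hcard ▸ (card_le_card_image_erase_add_one (by omega) he hv hev hX hbal).trans
      (Nat.add_le_add_right hdel 1)

end Circuits

section Travels

open Finset

variable {A A' : ℕ → ℕ → ℤ} {n r k i c : ℕ} {D D' : Finset ℕ}

theorem rowChange_eq_some_iff {c' : ℕ} : rowChange A n i c = some c' ↔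
    (c < c' ∧ A i c' ≠ A i c) ∧ c' ≤ n ∧ ∀ b < c', c < b → A i b = A i c := by
  simp [rowChange, List.find?_range_eq_some, or_iff_not_imp_left]

theorem exists_rowChange_eq_some {b : ℕ} (hcb : c < b) (hbn : b ≤ n) (hne : A i b ≠ A i c) :
    ∃ c' ≤ b, rowChange A n i c = some c' := by
  have hsome : (rowChange A n i c).isSome :=
    List.find?_isSome.2 ⟨b, List.mem_range.2 (Nat.lt_succ_of_le hbn), by simp [hcb, hne]⟩
  obtain ⟨c', hc'⟩ := Option.isSome_iff_exists.1 hsome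
  exact ⟨c', not_lt.1 fun hlt ↦ hne ((rowChange_eq_some_iff.1 hc').2.2 b hlt hcb), hc'⟩

theorem mem_Icc_of_ttEntry_eq_some (hn : 1 ≤ n) (h : ttEntry A n i = some c) : c ∈ Icc 1 n := by
  rcases i with _ | _ | i
  · simp [ttEntry] at h
  · obtain rfl : 1 = c := by simpa [ttEntry] using h
    simpa using hn
  · obtain ⟨b, -, hbc⟩ := Option.bind_eq_some_iff.1 h
    obtain ⟨⟨hlt, -⟩, hle, -⟩ := rowChange_eq_some_iff.1 hbc
    exact mem_Icc.2 ⟨by omega, hle⟩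

theorem ttEntry_eq_of_eq_neg (hn : 1 ≤ n) (h : ∀ i, ∀ j ∈ Icc 1 n, A' i j = -A i j) :
    ttEntry A' n = ttEntry A n := by
  ext1 i
  induction i using ttEntry.induct with
  | case1 => rfl
  | case2 => rfl
  | case3 i ih =>
    simp only [ttEntry, ih]
    refine Option.bind_congr fun c hc ↦ List.find?_congr fun b hb ↦ ?_
    have hc' := mem_Icc_of_ttEntry_eq_some hn hc
    refine decide_eq_decide.2 (and_congr_right fun hcb ↦ ?_)
    rw [h _ c hc', h _ b (by simp only [List.mem_range, mem_Icc] at *; omega), ne_eq, neg_inj]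

theorem ttFollows.mem_iff (h : ttFollows A n D) : c ∈ D ↔ ∃ i, 2 ≤ i ∧ ttEntry A n i = some c := by
  have hnone : ∀ i, #D + 2 ≤ i → ttEntry A n i = none :=
    Nat.le_induction h.1 fun i hi ih ↦ by
      obtain ⟨j, rfl⟩ := Nat.exists_eq_add_of_le' (show 1 ≤ i by omega)
      simp only [ttEntry, ih, Option.bind_none]
  refine (h.2 c).trans ⟨fun ⟨i, hi, _, hc⟩ ↦ ⟨i, hi, hc⟩, fun ⟨i, hi, hc⟩ ↦ ⟨i, hi, ?_, hc⟩⟩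
  by_contra! hDi
  exact Option.some_ne_none c (hc.symm.trans (hnone i hDi))

theorem ttFollows.unique (h : ttFollows A n D) (h' : ttFollows A n D') : D = D' := by
  ext c
  rw [h.mem_iff, h'.mem_iff]

theorem ttPositive_of_strictMono {f : Fin (r + 1) → ℕ} (hf : StrictMono f) (hpos : 1 ≤ f 0)
    (hle : ∀ t, f t ≤ n)
    (hne : ∀ t : Fin r, A (t + 1) (f t.castSucc) ≠ A (t + 1) (f t.succ)) : ttPositive A r n := by
  have hentry (t : Fin (r + 1)) : ∃ c ≤ f t, ttEntry A n (t + 1) = some c := by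
    induction t using Fin.induction with
    | zero => exact ⟨1, hpos, rfl⟩
    | succ t ih =>
      obtain ⟨c, hct, hc⟩ := ih
      have hlt : f t.castSucc < f t.succ := hf t.castSucc_lt_succ
      obtain ⟨b, hb, hcb, hbt⟩ : ∃ b ≤ f t.succ, c < b ∧ A (t + 1) b ≠ A (t + 1) c := by
        by_cases h : A (t + 1) (f t.castSucc) = A (t + 1) c
        · exact ⟨_, le_rfl, hct.trans_lt hlt, fun h' ↦ hne t (h.trans h'.symm)⟩
        · exact ⟨_, hlt.le, hct.lt_of_ne fun h' ↦ h (h' ▸ rfl), h⟩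
      obtain ⟨c', hc', hstep⟩ := exists_rowChange_eq_some hcb (hb.trans (hle _)) hbt
      exact ⟨c', hc'.trans hb, Option.bind_eq_some_iff.2 ⟨c, hc, hstep⟩⟩
  obtain ⟨c, -, hc⟩ := hentry (Fin.last r)
  exact Option.isSome_of_eq_some hc

theorem reorient_apply (A : ℕ → ℕ → ℤ) (S : Finset ℕ) (i j : ℕ) :
    reorient A S i j = colSign S j * A i j := by
  unfold reorient colSign
  split_ifs <;> simp

theorem colSign_Icc_sdiff {R : Finset ℕ} {j : ℕ} (hj : j ∈ Icc 1 n) :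
    colSign (Icc 1 n \ R) j = -colSign R j := by
  simp only [colSign, mem_sdiff, hj, true_and]
  split_ifs <;> simp_all

theorem IsNeighborlyTravel.exists_subset_erase_one (hn : 1 ≤ n) (h : IsNeighborlyTravel A r n k D) :
    ∃ R ⊆ (Icc 1 n).erase 1, ttFollows (reorient A R) n D ∧ IsNeighborly (reorient A R) r n k := by
  obtain ⟨R, hR, hfollows, hneigh⟩ := h
  by_cases h1 : 1 ∈ R
  · have hneg : ∀ i, ∀ j ∈ Icc 1 n, reorient A (Icc 1 n \ R) i j = -reorient A R i j :=
      fun i j hj ↦ by simp [reorient_apply, colSign_Icc_sdiff hj]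
    refine ⟨Icc 1 n \ R, subset_erase.2 ⟨sdiff_subset, by simp [h1]⟩, ?_, fun S hS hSk ↦ ?_⟩
    · rwa [ttFollows, ttEntry_eq_of_eq_neg hn hneg]
    · rw [ttPositive, ttEntry_eq_of_eq_neg hn (A := reorient (reorient A R) S)]
      · exact hneigh S hS hSk
      · intro i j hj
        rw [reorient_apply, hneg i j hj, reorient_apply _ S, mul_neg]
  · exact ⟨R, subset_erase.2 ⟨hR, h1⟩, hfollows, hneigh⟩

end Travels

section Lawrence

open Finset

variable {A : ℕ → ℕ → ℤ} {M : ℕ → ℕ → ℤˣ} {C R S : Finset ℕ} {n r k i j : ℕ} {ε : ℤˣ}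

theorem IsSignMatrix.exists_units (hA : IsSignMatrix r n A) :
    ∃ M : ℕ → ℕ → ℤˣ, ∀ i ∈ Icc 1 r, ∀ j ∈ Icc 1 n, A i j = M i j := by
  refine ⟨fun i j ↦ if A i j = 1 then 1 else -1, fun i hi j hj ↦ ?_⟩
  rw [mem_Icc] at hi hj
  rcases hA i j hi.1 hi.2 hj.1 hj.2 with h | h <;> simp [h]

/-- The chirotope of the Lawrence oriented matroid of `M`: the sign of a basis is the product of
the entries met when matching its elements, in increasing order, with the rows `1, 2, …`. -/
def lawrenceChirotope (M : ℕ → ℕ → ℤˣ) (B : Finset ℕ) : ℤˣ := ∏ j ∈ B, M (posIn B j + 1) j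

theorem circuitSign_lawrenceChirotope_consecutive (hi : i ∈ C) (hj : j ∈ C)
    (hij : ∀ c ∈ C, c < j ↔ c ≤ i) :
    circuitSign (lawrenceChirotope M) C j * M (posIn C i + 1) j =
      -(circuitSign (lawrenceChirotope M) C i * M (posIn C i + 1) i) := by
  have hlt : i < j := (hij i hi).2 le_rfl
  have hiC : i ∈ C.erase j := mem_erase.2 ⟨hlt.ne, hi⟩
  have hjC : j ∈ C.erase i := mem_erase.2 ⟨hlt.ne', hj⟩
  have hpos : posIn C j = posIn C i + 1 := by
    have hinsert : {c ∈ C | c < j} = insert i {c ∈ C | c < i} := by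
      ext c
      simp only [mem_filter, mem_insert]
      grind
    rw [posIn, hinsert, card_insert_of_notMem (by simp), posIn]
  have hpos_i : posIn (C.erase j) i = posIn C i := by
    simpa [hlt.not_gt] using posIn_erase_add (c := i) hj
  have hpos_j : posIn (C.erase i) j = posIn C i := by
    simpa [hlt, hpos] using posIn_erase_add (c := j) hi
  have hcommon : ∏ c ∈ (C.erase i).erase j, M (posIn (C.erase i) c + 1) c =
      ∏ c ∈ (C.erase j).erase i, M (posIn (C.erase j) c + 1) c := by
    rw [erase_right_comm]
    refine prod_congr rfl fun c hc ↦ ?_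
    simp only [mem_erase] at hc
    have hiff : i < c ↔ j < c := by
      have := hij c hc.2.2
      omega
    have hci := posIn_erase_add (c := c) hi
    have hcj := posIn_erase_add (c := c) hj
    simp only [hiff] at hci
    rw [show posIn (C.erase i) c = posIn (C.erase j) c by omega]
  rw [circuitSign, circuitSign, lawrenceChirotope, lawrenceChirotope, ← mul_prod_erase _ _ hiC,
    ← mul_prod_erase _ _ hjC, hcommon, hpos_i, hpos_j, hpos, pow_succ]
  simp only [mul_neg, mul_one, neg_mul, neg_inj]
  ac_rfl

theorem ttPositive_reorient_reorient (hM : ∀ i ∈ Icc 1 r, ∀ j ∈ Icc 1 n, A i j = M i j)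
    (hCn : C ⊆ Icc 1 n) (hCr : #C = r + 1)
    (hS : ∀ j ∈ C, colSign S j * colSign R j = ε * circuitSign (lawrenceChirotope M) C j) :
    ttPositive (reorient (reorient A R) S) r n := by
  let f : Fin (r + 1) ↪o ℕ := C.orderEmbOfFin hCr
  have hf (t : Fin (r + 1)) : f t ∈ C := C.orderEmbOfFin_mem hCr t
  have hentry (t : Fin r) (s : Fin (r + 1)) : reorient (reorient A R) S (t + 1) (f s) =
      (ε * (circuitSign (lawrenceChirotope M) C (f s) * M (t + 1) (f s)) : ℤˣ) := by
    rw [reorient_apply, reorient_apply, hM _ (mem_Icc.2 ⟨by omega, t.2⟩) _ (hCn (hf s)),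
      ← mul_assoc, ← mul_assoc, ← hS _ (hf s)]
    push_cast
    rfl
  refine ttPositive_of_strictMono f.strictMono (mem_Icc.1 (hCn (hf 0))).1
    (fun t ↦ (mem_Icc.1 (hCn (hf t))).2) fun t ↦ ?_
  have hnext : ∀ c ∈ C, c < f t.succ ↔ c ≤ f t.castSucc := by
    intro c hc
    obtain ⟨s, rfl⟩ : c ∈ Set.range f := by rwa [range_orderEmbOfFin]
    rw [f.lt_iff_lt, f.le_iff_le, Fin.le_castSucc_iff]
  have hconsec := circuitSign_lawrenceChirotope_consecutive (M := M) (hf _) (hf _) hnext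
  rw [posIn_orderEmbOfFin hCr, Fin.val_castSucc] at hconsec
  rw [hentry, hentry, hconsec, mul_neg, ne_eq, Units.val_inj]
  exact units_ne_neg_self _

theorem IsNeighborly.isBalanced (h : IsNeighborly (reorient A R) (2 * k + 2) n k)
    (hM : ∀ i ∈ Icc 1 (2 * k + 2), ∀ j ∈ Icc 1 n, A i j = M i j)
    (hC : C ∈ (Icc 1 n).powersetCard (2 * k + 3)) : IsBalanced (lawrenceChirotope M) C R := by
  rw [mem_powersetCard] at hC
  refine abs_sum_units_le_one hC.2 fun ε ↦ ?_
  let S : Finset ℕ := {j ∈ C | circuitSign (lawrenceChirotope M) C j * colSign R j = ε}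
  have hsign : ∀ j ∈ C, colSign S j * colSign R j =
      -ε * circuitSign (lawrenceChirotope M) C j := fun j hj ↦ by
    have hSj : colSign S j = -ε * (circuitSign (lawrenceChirotope M) C j * colSign R j) := by
      obtain hε | hε := eq_or_ne (circuitSign (lawrenceChirotope M) C j * colSign R j) ε
      · rw [colSign, if_pos (mem_filter.2 ⟨hj, hε⟩), hε, neg_mul, Int.units_mul_self]
      · rw [colSign, if_neg fun hjS : j ∈ S ↦ hε (mem_filter.1 hjS).2, Int.units_ne_iff_eq_neg.1 hε,
          neg_mul_neg, Int.units_mul_self]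
    rw [hSj, mul_assoc, mul_assoc, Int.units_mul_self, mul_one]
  by_contra! hcard
  exact h S ((filter_subset _ C).trans hC.1) hcard
    (ttPositive_reorient_reorient hM hC.1 hC.2 hsign)

end Lawrence

theorem statement_16_general (k n : ℕ) (hn : 2 * k + 5 ≤ n) (A : ℕ → ℕ → ℤ)
    (hA : IsSignMatrix (2 * k + 2) n A) :
    {D : Finset ℕ | IsPlainTravel (2 * k + 2) n D ∧
      IsNeighborlyTravel A (2 * k + 2) n k D}.ncard ≤ n := by
  classical
  obtain ⟨M, hM⟩ := hA.exists_units
  have hwitness (D : Finset ℕ) (hD : IsNeighborlyTravel A (2 * k + 2) n k D) :=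
    hD.exists_subset_erase_one (by omega)
  choose! R hRn hfollows hneigh using hwitness
  let X : Finset (Finset ℕ) := {S ∈ ((Finset.Icc 1 n).erase 1).powerset |
    IsNeighborly (reorient A S) (2 * k + 2) n k}
  calc {D : Finset ℕ | IsPlainTravel (2 * k + 2) n D ∧
        IsNeighborlyTravel A (2 * k + 2) n k D}.ncard
      ≤ (X : Set (Finset ℕ)).ncard := Set.ncard_le_ncard_of_injOn R ?_ ?_ X.finite_toSet
    _ = X.card := Set.ncard_coe_finset X
    _ ≤ (Finset.Icc 1 n).card := card_le_of_isBalanced (χ := lawrenceChirotope M) (k := k) (v := 1)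
      (by simpa using hn) (Finset.mem_Icc.2 ⟨le_rfl, by omega⟩) ?_ ?_
    _ = n := Nat.card_Icc 1 n
  · intro D hD
    exact Finset.mem_filter.2 ⟨Finset.mem_powerset.2 (hRn D hD.2), hneigh D hD.2⟩
  · intro D hD D' hD' heq
    exact (hfollows D hD.2).unique (heq ▸ hfollows D' hD'.2)
  · exact fun S hS ↦ Finset.mem_powerset.1 (Finset.mem_filter.1 hS).1
  · exact fun S hS C hC ↦ (Finset.mem_filter.1 hS).2.isBalanced hM hC

/-- Every 8×12 sign matrix has at most 12 3-neighborly plain travels. -/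
theorem statement_16 (A : ℕ → ℕ → ℤ) (hA : IsSignMatrix 8 12 A) :
    {D : Finset ℕ | IsPlainTravel 8 12 D ∧ IsNeighborlyTravel A 8 12 3 D}.ncard ≤ 12 :=
  statement_16_general 3 12 (by norm_num) A hA
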